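/- arXiv:1901.09349 — 2 statements merged into one kernel-verified Lean document; each statement's English description precedes it below -/
import Mathlib

section
/- There is a universal constant c > 0 such that the following holds. Let Σ = (S, M, A₁, B₃) be an α-expanding Path-of-Sets System of width w and length 3, where 0 < α < 1, whose corresponding graph G_Σ has maximum vertex degree at most d. Then there exist subsets Â₁ ⊆ A₁ and B̂₃ ⊆ B₃, each of cardinality at least c·α²·w/d³, such that the set Â₁ ∪ B̂₃ is well-linked in G_Σ. -/
/-- Number of ordered pairs `(a,b)` with `a ∈ A`, `b ∈ B`, `a` adjacent to `b` in `G`.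
For a partition `(A, Aᶜ)` this is exactly the number of edges crossing the cut. -/
noncomputable def cutCard {V : Type*} (G : SimpleGraph V) (A B : Set V) : ℕ :=
  Nat.card {p : V × V // p.1 ∈ A ∧ p.2 ∈ B ∧ G.Adj p.1 p.2}

/-- `G` is an `α`-expander: every cut `(A, Aᶜ)` into two non-empty parts has at least
`α · min(|A|,|Aᶜ|)` crossing edges. -/
def IsExpander {V : Type*} (G : SimpleGraph V) (α : ℝ) : Prop :=
  ∀ A : Set V, A.Nonempty → Aᶜ.Nonempty →
    α * (min (Nat.card ↥A) (Nat.card ↥(Aᶜ)) : ℝ) ≤ (cutCard G A Aᶜ : ℝ)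

/-- Maximum vertex degree of `G` is at most `d`. -/
def DegLE {V : Type*} (G : SimpleGraph V) (d : ℕ) : Prop :=
  ∀ v : V, Nat.card ↥{w : V | G.Adj v w} ≤ d

/-- `H` is a minor of `G`: there are pairwise-disjoint branch sets, each inducing a
connected subgraph of `G`, with an edge of `G` between the branch sets of every
pair of adjacent vertices of `H`. -/
def IsMinor {W V : Type*} (H : SimpleGraph W) (G : SimpleGraph V) : Prop :=
  ∃ φ : W → Set V,
    (∀ u, (G.induce (φ u)).Connected) ∧
    (∀ u v, u ≠ v → Disjoint (φ u) (φ v)) ∧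
    (∀ u v, H.Adj u v → ∃ a ∈ φ u, ∃ b ∈ φ v, G.Adj a b)

/-- The size of a graph: number of vertices plus number of edges. -/
noncomputable def gsize {V : Type*} (G : SimpleGraph V) : ℕ := Nat.card V + Nat.card G.edgeSet

/-- A set `A` of vertices of `G` is well-linked: for every pair `A', A''` of disjoint
equal-cardinality subsets of `A`, there are `|A'|` vertex-disjoint paths connecting `A'`
to `A''`, internally disjoint from `A`. -/
def WellLinked {V : Type*} (G : SimpleGraph V) (A : Set V) : Prop :=
  ∀ A' A'' : Set V, A' ⊆ A → A'' ⊆ A → Disjoint A' A'' →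
    Nat.card ↥A' = Nat.card ↥A'' →
    ∃ f : ↥A' → ↥A'', Function.Bijective f ∧
      ∃ p : ∀ a : ↥A', G.Walk a.val (f a).val,
        (∀ a, (p a).IsPath) ∧
        (∀ a b, a ≠ b → ∀ x, x ∈ (p a).support → x ∉ (p b).support) ∧
        (∀ a, ∀ x ∈ (p a).support, x ∈ A → x = a.val ∨ x = (f a).val)

/-- A Path-of-Sets System of length `ℓ` and width `w` on the ambient vertex type `V`:
pairwise disjoint clusters (connected graphs `S i` on the vertex sets `VS i`), subsets
`A i, B i ⊆ VS i` of `w` vertices each, and, for each `i < ℓ - 1`, a perfect matching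
`M i` between `B i` and `A (i+1)`. -/
structure PathOfSets (V : Type) (ℓ w : ℕ) where
  VS : Fin ℓ → Set V
  S : Fin ℓ → SimpleGraph V
  A : Fin ℓ → Set V
  B : Fin ℓ → Set V
  M : Fin ℓ → Set (V × V)
  VS_disj : ∀ i j, i ≠ j → Disjoint (VS i) (VS j)
  S_supp : ∀ i u v, (S i).Adj u v → u ∈ VS i ∧ v ∈ VS i
  S_conn : ∀ i, ((S i).induce (VS i)).Connected
  A_sub : ∀ i, A i ⊆ VS i
  B_sub : ∀ i, B i ⊆ VS i
  AB_disj : ∀ i, Disjoint (A i) (B i)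
  A_card : ∀ i, Nat.card ↥(A i) = w
  B_card : ∀ i, Nat.card ↥(B i) = w
  M_mem : ∀ i p, p ∈ M i →
    ∃ h : (i : ℕ) + 1 < ℓ, p.1 ∈ B i ∧ p.2 ∈ A ⟨(i : ℕ) + 1, h⟩
  M_match₁ : ∀ (i : Fin ℓ), (i : ℕ) + 1 < ℓ → ∀ b ∈ B i, ∃! a : V, (b, a) ∈ M i
  M_match₂ : ∀ (i : Fin ℓ) (h : (i : ℕ) + 1 < ℓ),
    ∀ a ∈ A ⟨(i : ℕ) + 1, h⟩, ∃! b : V, (b, a) ∈ M i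

/-- The graph `G_Σ` corresponding to a Path-of-Sets System: the union of all clusters
together with all matching edges. -/
def PathOfSets.graph {V : Type} {ℓ w : ℕ} (P : PathOfSets V ℓ w) : SimpleGraph V :=
  (⨆ i, P.S i) ⊔ SimpleGraph.fromRel (fun u v => ∃ i, (u, v) ∈ P.M i)

section helpers
open Classical

/-- `(A, B)` is a separation of `G`. -/
def IsSep {V : Type} [Fintype V] (G : SimpleGraph V) (A B : Finset V) : Prop :=
  (∀ v, v ∈ A ∨ v ∈ B) ∧ ∀ u, u ∉ B → ∀ v, v ∉ A → ¬ G.Adj u v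

lemma walk_iter {V : Type} (G : SimpleGraph V) (h : V → V) (hh : ∀ v, h v = v ∨ G.Adj v (h v))
    (s : V) (n : ℕ) : ∃ p : G.Walk s (h^[n] s), ∀ x ∈ p.support, ∃ i ≤ n, x = h^[i] s := by
  induction n with
  | zero => exact ⟨SimpleGraph.Walk.nil, by simp⟩
  | succ n ih =>
    obtain ⟨p, hp⟩ := ih
    rw [Function.iterate_succ_apply']
    rcases hh (h^[n] s) with h1 | h1
    · refine ⟨p.copy rfl h1.symm, ?_⟩
      intro x hx
      rw [SimpleGraph.Walk.support_copy] at hx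
      obtain ⟨i, hi, e⟩ := hp x hx
      exact ⟨i, by omega, e⟩
    · refine ⟨p.concat h1, ?_⟩
      intro x hx
      rw [SimpleGraph.Walk.support_concat] at hx
      simp only [List.mem_append, List.mem_singleton] at hx
      rcases hx with hx | hx
      · obtain ⟨i, hi, e⟩ := hp x hx
        exact ⟨i, by omega, e⟩
      · exact ⟨n + 1, le_rfl, by rw [Function.iterate_succ_apply']; exact hx⟩

/-- Menger's theorem in linkage form, through Hall's theorem. -/
lemma linkage {V : Type} [Fintype V] (G : SimpleGraph V) (S T : Finset V)
    (H : ∀ A B : Finset V, IsSep G A B → S ⊆ A → T ⊆ B → S.card ≤ (A ∩ B).card) :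
    ∃ e : V → V, (∀ s ∈ S, e s ∈ T) ∧ ∃ p : ∀ s : V, G.Walk s (e s),
      (∀ s, (p s).IsPath) ∧
      (∀ s ∈ S, ∀ s' ∈ S, ∀ x, x ∈ (p s).support → x ∈ (p s').support → s = s') := by
  have hall : ∃ g : {v // v ∉ T} → V, Function.Injective g ∧
      ∀ v, g v ∈ Finset.univ.filter (fun u => u ∉ S ∧ (u = v.1 ∨ G.Adj v.1 u)) := by
    rw [← Finset.all_card_le_biUnion_card_iff_exists_injective
      (fun v : {v // v ∉ T} => Finset.univ.filter (fun u => u ∉ S ∧ (u = v.1 ∨ G.Adj v.1 u)))]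
    intro W
    set W' : Finset V := W.image Subtype.val with hW'
    have hWc : W'.card = W.card := Finset.card_image_of_injective _ Subtype.val_injective
    set N := W.biUnion
      (fun v : {v // v ∉ T} => Finset.univ.filter (fun u => u ∉ S ∧ (u = v.1 ∨ G.Adj v.1 u))) with hN
    have hNmem : ∀ u, u ∈ N ↔ u ∉ S ∧ ∃ v ∈ W', u = v ∨ G.Adj v u := by
      intro u
      simp only [hN, hW', Finset.mem_biUnion, Finset.mem_filter, Finset.mem_univ, true_and,
        Finset.mem_image]
      constructor
      · rintro ⟨v, hv, h1, h2⟩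
        exact ⟨h1, v.1, ⟨v, hv, rfl⟩, h2⟩
      · rintro ⟨h1, _, ⟨v, hv, rfl⟩, h2⟩
        exact ⟨v, hv, h1, h2⟩
    have hWA : W' ⊆ N ∪ S := by
      intro u hu
      by_cases hs : u ∈ S
      · simp [hs]
      · exact Finset.mem_union_left _ ((hNmem u).2 ⟨hs, u, hu, Or.inl rfl⟩)
    have key := H (N ∪ S) (Finset.univ \ W') ?_ (Finset.subset_union_right) ?_
    · have h1 : (N ∪ S) ∩ (Finset.univ \ W') = (N ∪ S) \ W' := by
        ext x; simp
      rw [h1, Finset.card_sdiff_of_subset hWA] at key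
      have h2 := Finset.card_union_le N S
      have h3 := Finset.card_le_card hWA
      omega
    · constructor
      · intro v
        by_cases hv : v ∈ W'
        · exact Or.inl (hWA hv)
        · right; simp [hv]
      · intro u hu v hv hadj
        simp only [Finset.mem_sdiff, Finset.mem_univ, true_and, not_not] at hu
        simp only [Finset.mem_union, not_or] at hv
        exact hv.1 ((hNmem v).2 ⟨hv.2, u, hu, Or.inr hadj⟩)
    · intro t ht
      simp only [Finset.mem_sdiff, Finset.mem_univ, true_and, hW', Finset.mem_image]
      rintro ⟨v, _, rfl⟩
      exact v.2 ht
  obtain ⟨g, ginj, hg⟩ := hall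
  simp only [Finset.mem_filter, Finset.mem_univ, true_and] at hg
  set h : V → V := fun v => if hv : v ∉ T then g ⟨v, hv⟩ else v with hdef
  have hh : ∀ v, h v = v ∨ G.Adj v (h v) := by
    intro v
    by_cases hv : v ∉ T
    · simp only [hdef, dif_pos hv]; exact (hg ⟨v, hv⟩).2
    · left; simp only [hdef, dif_neg hv]
  have hS : ∀ v, v ∉ T → h v ∉ S := by
    intro v hv
    simp only [hdef, dif_pos hv]; exact (hg ⟨v, hv⟩).1
  have hinj : ∀ u v, u ∉ T → v ∉ T → h u = h v → u = v := by
    intro u v hu hv e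
    simp only [hdef, dif_pos hv, dif_pos hu] at e
    exact congrArg Subtype.val (ginj e)
  have back : ∀ (i k : ℕ) (s s' : V), (∀ a < i, h^[a] s ∉ T) → (∀ a < i + k, h^[a] s' ∉ T) →
      h^[i] s = h^[i + k] s' → s = h^[k] s' := by
    intro i
    induction i with
    | zero => intro k s s' _ _ e; simpa using e
    | succ i ih =>
      intro k s s' h1 h2 e
      apply ih k s s' (fun a ha => h1 a (by omega)) (fun a ha => h2 a (by omega))
      rw [show i + 1 + k = (i + k) + 1 by ring, Function.iterate_succ_apply',
        Function.iterate_succ_apply'] at e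
      exact hinj _ _ (h1 i (by omega)) (h2 (i + k) (by omega)) e
  have main : ∀ (i k : ℕ) (s s' : V), s ∈ S → (∀ a < i, h^[a] s ∉ T) →
      (∀ a < i + k, h^[a] s' ∉ T) → h^[i] s = h^[i + k] s' → k = 0 ∧ s = s' := by
    intro i k s s' hs h1 h2 e
    have := back i k s s' h1 h2 e
    rcases k with _ | k
    · exact ⟨rfl, by simpa using this⟩
    · exfalso
      rw [Function.iterate_succ_apply'] at this
      exact hS _ (h2 k (by omega)) (this ▸ hs)
  have ex : ∀ s ∈ S, ∃ n, h^[n] s ∈ T := by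
    intro s hs
    by_contra hcon
    push Not at hcon
    have : Function.Injective (fun n : ℕ => h^[n] s) := by
      intro i j e
      simp only at e
      rcases le_total i j with hij | hij
      · obtain ⟨k, rfl⟩ := Nat.exists_eq_add_of_le hij
        have := (main i k s s hs (fun a _ => hcon a) (fun a _ => hcon a) e).1
        omega
      · obtain ⟨k, rfl⟩ := Nat.exists_eq_add_of_le hij
        have := (main j k s s hs (fun a _ => hcon a) (fun a _ => hcon a) e.symm).1
        omega
    exact not_injective_infinite_finite _ this
  have ex2 : ∀ s, ∃ n, s ∈ S → (h^[n] s ∈ T ∧ ∀ a < n, h^[a] s ∉ T) := by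
    intro s
    by_cases hs : s ∈ S
    · exact ⟨Nat.find (ex s hs), fun _ => ⟨Nat.find_spec (ex s hs), fun a ha => Nat.find_min (ex s hs) ha⟩⟩
    · exact ⟨0, fun h => absurd h hs⟩
  choose n hn using ex2
  choose p hp using fun s => walk_iter G h hh s (n s)
  refine ⟨fun s => h^[n s] s, fun s hs => (hn s hs).1, fun s => (p s).bypass,
    fun s => (p s).bypass_isPath, ?_⟩
  intro s hs s' hs' x hx hx'
  obtain ⟨i, hi, e⟩ := hp s x ((p s).support_bypass_subset_support hx)
  obtain ⟨j, hj, eq2⟩ := hp s' x ((p s').support_bypass_subset_support hx')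
  rcases le_total i j with hij | hij
  · obtain ⟨k, rfl⟩ := Nat.exists_eq_add_of_le hij
    exact (main i k s s' hs (fun a ha => (hn s hs).2 a (by omega))
      (fun a ha => (hn s' hs').2 a (by omega)) (e ▸ eq2)).2
  · obtain ⟨k, rfl⟩ := Nat.exists_eq_add_of_le hij
    exact (main j k s' s hs' (fun a ha => (hn s' hs').2 a (by omega))
      (fun a ha => (hn s hs).2 a (by omega)) (eq2 ▸ e)).2.symm

/-- Independence in the tangle matroid of `Q`. -/
def Indep {V : Type} [Fintype V] (G : SimpleGraph V) (Q : Finset V) (w : ℕ) (I : Finset V) : Prop :=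
  ∀ A B : Finset V, IsSep G A B → (A ∩ Q).card < w → I ⊆ A → I.card ≤ (A ∩ B).card

lemma IsSep.symm {V : Type} [Fintype V] {G : SimpleGraph V} {A B : Finset V} (h : IsSep G A B) :
    IsSep G B A :=
  ⟨fun v => (h.1 v).symm, fun u hu v hv e => h.2 v hv u hu e.symm⟩

lemma IsSep.union {V : Type} [Fintype V] {G : SimpleGraph V} {A B C D : Finset V}
    (h : IsSep G A B) (h' : IsSep G C D) : IsSep G (A ∪ C) (B ∩ D) := by
  constructor
  · intro v
    have := h.1 v
    have := h'.1 v
    simp only [Finset.mem_union, Finset.mem_inter]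
    tauto
  · intro u hu v hv e
    simp only [Finset.mem_union, Finset.mem_inter, not_or] at hu hv
    by_cases hb : u ∈ B
    · exact h'.2 u (fun hd => hu ⟨hb, hd⟩) v hv.2 e
    · exact h.2 u hb v hv.1 e

lemma submod {V : Type} (A B C D : Finset V) :
    ((A ∩ C) ∩ (B ∪ D)).card + ((A ∪ C) ∩ (B ∩ D)).card ≤ (A ∩ B).card + (C ∩ D).card := by
  rw [← Finset.card_union_add_card_inter, ← Finset.card_union_add_card_inter (A ∩ B)]
  apply Nat.add_le_add <;> apply Finset.card_le_card <;> intro x <;>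
    simp only [Finset.mem_union, Finset.mem_inter] <;> tauto

lemma indep_ext {V : Type} [Fintype V] (G : SimpleGraph V) (Q : Finset V) (w θ : ℕ) (hw : 0 < w)
    (hQ : 2 * w ≤ Q.card)
    (hT : ∀ A B : Finset V, IsSep G A B → (A ∩ B).card < θ →
      8 * (A ∩ Q).card ≤ w ∨ 8 * (B ∩ Q).card ≤ w)
    (U : Finset V)
    (hU : ∀ A B : Finset V, IsSep G A B → (A ∩ B).card < θ → U ⊆ A → ¬ (A ∩ Q).card < w)
    (I : Finset V) (hI : Indep G Q w I) (hIθ : I.card < θ) :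
    ∃ u ∈ U, u ∉ I ∧ Indep G Q w (insert u I) := by
  by_contra hcon
  push Not at hcon
  have cov : ∀ A B : Finset V, IsSep G A B → Q.card ≤ (A ∩ Q).card + (B ∩ Q).card := by
    intro A B h
    refine le_trans (Finset.card_le_card ?_) (Finset.card_union_le _ _)
    intro x hx
    have := h.1 x
    simp only [Finset.mem_union, Finset.mem_inter]
    tauto
  have tight : ∀ A B : Finset V, IsSep G A B → (A ∩ B).card < θ → (A ∩ Q).card < w →
      8 * (A ∩ Q).card ≤ w := by
    intro A B h1 h2 h3
    have := cov A B h1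
    rcases hT A B h1 h2 with h | h <;> omega
  -- the family of tight small separations containing I
  let F : Finset (Finset V × Finset V) := Finset.univ.filter
    (fun X => IsSep G X.1 X.2 ∧ (X.1 ∩ Q).card < w ∧ I ⊆ X.1 ∧ (X.1 ∩ X.2).card ≤ I.card)
  have hF : ∀ A B : Finset V, (A, B) ∈ F ↔
      (IsSep G A B ∧ (A ∩ Q).card < w ∧ I ⊆ A ∧ (A ∩ B).card ≤ I.card) := by
    intro A B; simp [F]
  have clos : ∀ A B C D : Finset V, (A, B) ∈ F → (C, D) ∈ F → (A ∪ C, B ∩ D) ∈ F := by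
    intro A B C D h1 h2
    rw [hF] at h1 h2 ⊢
    obtain ⟨a1, a2, a3, a4⟩ := h1
    obtain ⟨b1, b2, b3, b4⟩ := h2
    have t1 := tight A B a1 (by omega) a2
    have t2 := tight C D b1 (by omega) b2
    refine ⟨a1.union b1, ?_, fun x hx => Finset.mem_union_left _ (a3 hx), ?_⟩
    · have : ((A ∪ C) ∩ Q).card ≤ (A ∩ Q).card + (C ∩ Q).card := by
        rw [Finset.union_inter_distrib_right]; exact Finset.card_union_le _ _
      omega
    · have h3 := submod A B C D
      have h4 : IsSep G (A ∩ C) (B ∪ D) := (a1.symm.union b1.symm).symm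
      have h5 := hI _ _ h4 (lt_of_le_of_lt (Finset.card_le_card (by
        intro x; simp only [Finset.mem_inter]; tauto)) a2) (Finset.subset_inter a3 b3)
      omega
  have hnew : ∀ u ∈ U, ∃ A B : Finset V, u ∈ A ∧ ((A, B) ∈ F ∨ u ∈ I) := by
    intro u hu
    by_cases hui : u ∈ I
    · exact ⟨I, I, hui, Or.inr hui⟩
    · have := hcon u hu hui
      unfold Indep at this
      push Not at this
      obtain ⟨A, B, h1, h2, h3, h4⟩ := this
      rw [Finset.card_insert_of_notMem hui] at h4
      exact ⟨A, B, h3 (Finset.mem_insert_self _ _), Or.inl ((hF A B).2 ⟨h1, h2,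
        fun x hx => h3 (Finset.mem_insert_of_mem hx), by omega⟩)⟩
  by_cases hne : F.Nonempty
  · obtain ⟨⟨A, B⟩, hAB, hmax⟩ := Finset.exists_max_image F (fun X => X.1.card) hne
    have h0 := (hF A B).1 hAB
    refine hU A B h0.1 (by omega) ?_ h0.2.1
    intro u hu
    obtain ⟨C, D, huC, hCD | hui⟩ := hnew u hu
    · have := hmax _ (clos A B C D hAB hCD)
      simp only at this
      have e : A = A ∪ C := Finset.eq_of_subset_of_card_le Finset.subset_union_left this
      rw [e]; exact Finset.mem_union_right _ huC
    · exact h0.2.2.1 hui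
  · have hUI : U ⊆ I := by
      intro u hu
      obtain ⟨C, D, huC, hCD | hui⟩ := hnew u hu
      · exact absurd ⟨_, hCD⟩ hne
      · exact hui
    have hs : IsSep G I Finset.univ := ⟨fun v => Or.inr (Finset.mem_univ v),
      fun u hu => absurd (Finset.mem_univ u) hu⟩
    have ho : (I ∩ Finset.univ).card < θ := by simpa using hIθ
    by_cases hsm : (I ∩ Q).card < w
    · exact hU I Finset.univ hs ho hUI hsm
    · rcases hT _ _ hs ho with h | h
      · omega
      · simp at h; omega

lemma indep_build {V : Type} [Fintype V] (G : SimpleGraph V) (Q : Finset V) (w θ : ℕ) (hw : 0 < w)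
    (hQ : 2 * w ≤ Q.card)
    (hT : ∀ A B : Finset V, IsSep G A B → (A ∩ B).card < θ →
      8 * (A ∩ Q).card ≤ w ∨ 8 * (B ∩ Q).card ≤ w)
    (U : Finset V)
    (hU : ∀ A B : Finset V, IsSep G A B → (A ∩ B).card < θ → U ⊆ A → ¬ (A ∩ Q).card < w)
    (I : Finset V) (hI : Indep G Q w I) (m : ℕ) (hIθ : I.card + m ≤ θ) :
    ∃ J : Finset V, J ⊆ U ∧ Disjoint I J ∧ J.card = m ∧ Indep G Q w (I ∪ J) := by
  induction m with
  | zero => exact ⟨∅, by simp, by simp, rfl, by simpa using hI⟩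
  | succ m ih =>
    obtain ⟨J, h1, h2, h3, h4⟩ := ih (by omega)
    obtain ⟨u, hu, hu2, hu3⟩ := indep_ext G Q w θ hw hQ hT U hU (I ∪ J) h4
      (by have := Finset.card_union_le I J; omega)
    rw [Finset.mem_union, not_or] at hu2
    refine ⟨insert u J, Finset.insert_subset hu h1, ?_, ?_, ?_⟩
    · rw [Finset.disjoint_insert_right]; exact ⟨hu2.1, h2⟩
    · rw [Finset.card_insert_of_notMem hu2.2, h3]
    · rwa [Finset.union_insert]

lemma indep_mono {V : Type} [Fintype V] (G : SimpleGraph V) (Q : Finset V) (w θ : ℕ) (hw : 0 < w)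
    (hQ : 2 * w ≤ Q.card)
    (hT : ∀ A B : Finset V, IsSep G A B → (A ∩ B).card < θ →
      8 * (A ∩ Q).card ≤ w ∨ 8 * (B ∩ Q).card ≤ w)
    (I J : Finset V) (hI : Indep G Q w I) (hIθ : I.card ≤ θ) (hJ : J ⊆ I) : Indep G Q w J := by
  intro A B hs hsm hJA
  by_contra hlt
  push Not at hlt
  have hK : (I \ J).card + J.card = I.card := Finset.card_sdiff_add_card_eq_card hJ
  have hs' : IsSep G (A ∪ (I \ J)) (B ∪ (I \ J)) := by
    constructor
    · intro v
      rcases hs.1 v with h | h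
      · exact Or.inl (Finset.mem_union_left _ h)
      · exact Or.inr (Finset.mem_union_left _ h)
    · intro u hu v hv
      exact hs.2 u (fun h => hu (Finset.mem_union_left _ h)) v
        (fun h => hv (Finset.mem_union_left _ h))
  have ho : ((A ∪ (I \ J)) ∩ (B ∪ (I \ J))).card < I.card := by
    rw [← Finset.inter_union_distrib_right]
    have := Finset.card_union_le (A ∩ B) (I \ J)
    omega
  have hIA : I ⊆ A ∪ (I \ J) := by
    intro x hx
    by_cases hxJ : x ∈ J
    · exact Finset.mem_union_left _ (hJA hxJ)
    · exact Finset.mem_union_right _ (Finset.mem_sdiff.2 ⟨hx, hxJ⟩)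
  have hcov : Q.card ≤ (A ∩ Q).card + (B ∩ Q).card := by
    refine le_trans (Finset.card_le_card ?_) (Finset.card_union_le _ _)
    intro x hx
    have := hs.1 x
    simp only [Finset.mem_union, Finset.mem_inter]
    tauto
  have hBB : (B ∩ Q).card ≤ ((B ∪ (I \ J)) ∩ Q).card := Finset.card_le_card (by
    intro x; simp only [Finset.mem_union, Finset.mem_inter]; tauto)
  rcases hT _ _ hs' (by omega) with h | h
  · have := hI _ _ hs' (by omega) hIA
    omega
  · omega

lemma wellLinked_of_indep {V : Type} [Fintype V] (G : SimpleGraph V) (Q : Finset V) (w θ : ℕ)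
    (hw : 0 < w) (hQ : 2 * w ≤ Q.card)
    (hT : ∀ A B : Finset V, IsSep G A B → (A ∩ B).card < θ →
      8 * (A ∩ Q).card ≤ w ∨ 8 * (B ∩ Q).card ≤ w)
    (I : Finset V) (hI : Indep G Q w I) (hIθ : I.card ≤ θ) : WellLinked G (I : Set V) := by
  intro A' A'' hA' hA'' hdis hcard
  set S := A'.toFinset with hS
  set T := A''.toFinset with hTd
  have hST : Disjoint S T := by rw [hS, hTd, Set.disjoint_toFinset]; exact hdis
  have hSI : S ⊆ I := by intro x hx; exact hA' (by simpa [hS] using hx)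
  have hTI : T ⊆ I := by intro x hx; exact hA'' (by simpa [hTd] using hx)
  have hSTc : S.card = T.card := by
    rw [hS, hTd, Set.toFinset_card, Set.toFinset_card, ← Nat.card_eq_fintype_card,
      ← Nat.card_eq_fintype_card]; exact hcard
  set R := I \ (S ∪ T) with hR
  let G' : SimpleGraph V :=
    { Adj := fun u v => G.Adj u v ∧ u ∉ R ∧ v ∉ R
      symm := ⟨fun u v h => ⟨h.1.symm, h.2.2, h.2.1⟩⟩
      loopless := ⟨fun u h => G.loopless.irrefl u h.1⟩ }
  have hle : G' ≤ G := fun u v h => h.1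
  have hRS : Disjoint S R := by
    rw [hR, Finset.disjoint_left]; intro x hx; simp [hx]
  have hRT : Disjoint T R := by
    rw [hR, Finset.disjoint_left]; intro x hx; simp [hx]
  have hcut : ∀ A B : Finset V, IsSep G' A B → S ⊆ A → T ⊆ B → S.card ≤ (A ∩ B).card := by
    intro A B hs hSA hTB
    by_contra hlt
    push Not at hlt
    have hs' : IsSep G (A ∪ R) (B ∪ R) := by
      constructor
      · intro v
        rcases hs.1 v with h | h
        · exact Or.inl (Finset.mem_union_left _ h)
        · exact Or.inr (Finset.mem_union_left _ h)
      · intro u hu v hv e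
        simp only [Finset.mem_union, not_or] at hu hv
        exact hs.2 u hu.1 v hv.1 ⟨e, hu.2, hv.2⟩
    have ho : ((A ∪ R) ∩ (B ∪ R)).card < S.card + R.card := by
      rw [← Finset.inter_union_distrib_right]
      have := Finset.card_union_le (A ∩ B) R
      omega
    have hSR : (S ∪ R).card = S.card + R.card := Finset.card_union_of_disjoint hRS
    have hTR : (T ∪ R).card = T.card + R.card := Finset.card_union_of_disjoint hRT
    have hSRI : S ∪ R ⊆ I := Finset.union_subset hSI Finset.sdiff_subset
    have hTRI : T ∪ R ⊆ I := Finset.union_subset hTI Finset.sdiff_subset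
    have := Finset.card_le_card hSRI
    rcases hT _ _ hs' (by omega) with h | h
    · have := indep_mono G Q w θ hw hQ hT I _ hI hIθ hSRI _ _ hs' (by omega)
        (Finset.union_subset_union_left hSA)
      omega
    · have := indep_mono G Q w θ hw hQ hT I _ hI hIθ hTRI _ _ hs'.symm (by omega)
        (Finset.union_subset_union_left hTB)
      rw [Finset.inter_comm] at this
      omega
  obtain ⟨e, he, p, hp, hpd⟩ := linkage G' S T hcut
  have mS : ∀ x, x ∈ A' ↔ x ∈ S := fun x => by simp [hS]
  have mT : ∀ x, x ∈ A'' ↔ x ∈ T := fun x => by simp [hTd]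
  have supp : ∀ (u v : V) (q : G'.Walk u v), u ∉ R → ∀ x ∈ q.support, x ∉ R := by
    intro u v q
    induction q with
    | nil => intro hu x hx; simp at hx; rwa [hx]
    | cons h q ih =>
      intro hu x hx
      rw [SimpleGraph.Walk.support_cons, List.mem_cons] at hx
      rcases hx with rfl | hx
      · exact hu
      · exact ih h.2.2 x hx
  let f : ↥A' → ↥A'' := fun a => ⟨e a.1, (mT _).2 (he a.1 ((mS _).1 a.2))⟩
  have finj : Function.Injective f := by
    intro a b hab
    have hab' : e a.1 = e b.1 := congrArg Subtype.val hab
    apply Subtype.ext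
    apply hpd a.1 ((mS _).1 a.2) b.1 ((mS _).1 b.2) (e a.1)
    · exact (p a.1).end_mem_support
    · rw [hab']; exact (p b.1).end_mem_support
  have fbij : Function.Bijective f :=
    (Nat.bijective_iff_injective_and_card f).2 ⟨finj, hcard⟩
  refine ⟨f, fbij, fun a => (p a.1).mapLe hle, ?_, ?_, ?_⟩
  · intro a
    exact (SimpleGraph.Walk.isPath_mapLe hle).2 (hp a.1)
  · intro a b hab x hx hx'
    rw [SimpleGraph.Walk.support_mapLe_eq_support] at hx hx'
    exact hab (Subtype.ext (hpd a.1 ((mS _).1 a.2) b.1 ((mS _).1 b.2) x hx hx'))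
  · intro a x hx hxI
    rw [SimpleGraph.Walk.support_mapLe_eq_support] at hx
    have haS := (mS _).1 a.2
    have hxR := supp _ _ (p a.1) (Finset.disjoint_left.1 hRS haS) x hx
    have hxST : x ∈ S ∨ x ∈ T := by
      by_contra hc
      exact hxR (by rw [hR, Finset.mem_sdiff, Finset.mem_union]; exact ⟨hxI, hc⟩)
    rcases hxST with h | h
    · left
      exact hpd x h a.1 haS x (p x).start_mem_support hx
    · right
      obtain ⟨b, hb⟩ := fbij.2 ⟨x, (mT x).2 h⟩
      have hb' : e b.1 = x := congrArg Subtype.val hb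
      have : a.1 = b.1 := hpd a.1 haS b.1 ((mS _).1 b.2) x hx (hb' ▸ (p b.1).end_mem_support)
      show x = e a.1
      rw [this, hb']

lemma wellLinked_pair {V : Type} [Fintype V] (G : SimpleGraph V) (a b : V) (h : G.Reachable a b) :
    WellLinked G ({a} ∪ {b} : Set V) := by
  intro A' A'' hA' hA'' hdis hcard
  have hr : ∀ x ∈ ({a} ∪ {b} : Set V), ∀ y ∈ ({a} ∪ {b} : Set V), G.Reachable x y := by
    intro x hx y hy
    simp only [Set.mem_union, Set.mem_singleton_iff] at hx hy
    rcases hx with rfl | rfl <;> rcases hy with rfl | rfl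
    · exact SimpleGraph.Reachable.refl _
    · exact h
    · exact h.symm
    · exact SimpleGraph.Reachable.refl _
  have h3 : ∀ x ∈ ({a} ∪ {b} : Set V), ∀ y ∈ ({a} ∪ {b} : Set V), ∀ z ∈ ({a} ∪ {b} : Set V),
      x ≠ y → z = x ∨ z = y := by
    intro x hx y hy z hz hxy
    simp only [Set.mem_union, Set.mem_singleton_iff] at hx hy hz
    grind
  have hcc : A'.ncard = A''.ncard := hcard
  obtain ⟨φ⟩ : Nonempty (↥A' ≃ ↥A'') := Finite.card_eq.1 hcard
  have hne : ∀ x : ↥A', ∀ y : ↥A'', x.1 ≠ y.1 := by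
    intro x y e
    exact Set.disjoint_left.1 hdis x.2 (e ▸ y.2)
  refine ⟨φ, φ.bijective, fun x => (hr x.1 (hA' x.2) (φ x).1 (hA'' (φ x).2)).some.bypass,
    fun x => SimpleGraph.Walk.bypass_isPath _, ?_, ?_⟩
  · intro x y hxy
    exfalso
    rcases h3 x.1 (hA' x.2) (φ x).1 (hA'' (φ x).2) y.1 (hA' y.2) (hne _ _) with h | h
    · exact hxy (Subtype.ext h.symm)
    · exact hne _ _ h
  · intro x z _ hz
    exact h3 x.1 (hA' x.2) (φ x).1 (hA'' (φ x).2) z hz (hne _ _)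

lemma expander_dichotomy {V : Type} [Fintype V] (G H : SimpleGraph V) (hHG : H ≤ G) (Q : Finset V)
    (w d : ℕ) (α : ℝ) (hα : 0 < α) (hα1 : α < 1) (hd : 0 < d)
    (hexp : IsExpander (H.induce (Q : Set V)) α) (hdeg : DegLE G d)
    (A B : Finset V) (hs : IsSep G A B) (hx : 16 * d * ((A ∩ B).card : ℝ) ≤ α * w) :
    8 * (A ∩ Q).card ≤ w ∨ 8 * (B ∩ Q).card ≤ w := by
  set X := A ∩ B with hX
  have hd1 : (1 : ℝ) ≤ d := by exact_mod_cast hd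
  have hXw : 16 * (X.card : ℝ) ≤ w := by
    have h1 : 16 * (X.card : ℝ) ≤ 16 * d * X.card := by
      have : (0 : ℝ) ≤ X.card := by positivity
      nlinarith
    have h2 : α * w ≤ w := by
      have : (0 : ℝ) ≤ w := by positivity
      nlinarith
    linarith
  have hXw' : 16 * X.card ≤ w := by exact_mod_cast hXw
  let Y : Set (Q : Set V) := {v | v.1 ∉ B}
  have cY : Nat.card Y = ((A \ B) ∩ Q).card := by
    rw [Nat.card_coe_set_eq, ← Set.ncard_coe_finset, ← Set.ncard_image_of_injective Y Subtype.val_injective]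
    · congr 1
      ext x
      have := hs.1 x
      simp [Y]
      tauto
  have cYc : Nat.card ↥(Yᶜ) = (B ∩ Q).card := by
    rw [Nat.card_coe_set_eq, ← Set.ncard_coe_finset, ← Set.ncard_image_of_injective Yᶜ Subtype.val_injective]
    · congr 1
      ext x
      simp [Y]
  have hAQ : (A ∩ Q).card ≤ ((A \ B) ∩ Q).card + X.card := by
    refine le_trans (Finset.card_le_card ?_) (Finset.card_union_le _ _)
    intro x
    simp only [hX, Finset.mem_union, Finset.mem_inter, Finset.mem_sdiff]
    tauto
  by_cases hY : Y.Nonempty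
  swap
  · left
    rw [Set.not_nonempty_iff_eq_empty] at hY
    have : ((A \ B) ∩ Q).card = 0 := by rw [← cY, hY]; simp
    omega
  by_cases hYc : (Yᶜ).Nonempty
  swap
  · right
    rw [Set.not_nonempty_iff_eq_empty] at hYc
    have : (B ∩ Q).card = 0 := by rw [← cYc, hYc]; simp
    omega
  have h1 := hexp Y hY hYc
  have hcut : cutCard (H.induce (Q : Set V)) Y Yᶜ ≤ X.card * d := by
    unfold cutCard
    have : Nat.card (Σ x : X, ↥{v : V | G.Adj x.1 v}) ≤ X.card * d := by
      rw [Nat.card_sigma]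
      calc _ ≤ ∑ x : X, d := Finset.sum_le_sum (fun x _ => hdeg x.1)
        _ = _ := by simp
    refine le_trans ?_ this
    have key : ∀ q : {p : ↥(Q : Set V) × ↥(Q : Set V) //
        p.1 ∈ Y ∧ p.2 ∈ Yᶜ ∧ (H.induce (Q : Set V)).Adj p.1 p.2},
        q.1.2.1 ∈ X ∧ G.Adj q.1.2.1 q.1.1.1 := by
      rintro ⟨⟨u, v⟩, hu, hv, he⟩
      have he' : H.Adj u.1 v.1 := he
      have hv' : v.1 ∈ B := by simpa [Y] using hv
      refine ⟨?_, (hHG he').symm⟩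
      rw [hX, Finset.mem_inter]
      refine ⟨?_, hv'⟩
      by_contra hA
      exact hs.2 u.1 hu v.1 hA (hHG he')
    apply Nat.card_le_card_of_injective
      (fun q => (⟨⟨q.1.2.1, (key q).1⟩, ⟨q.1.1.1, by simpa using (key q).2⟩⟩ : Σ x : X, ↥{v : V | G.Adj x.1 v}))
    rintro ⟨⟨u, v⟩, hq⟩ ⟨⟨u', v'⟩, hq'⟩ e
    obtain ⟨u, hu⟩ := u
    obtain ⟨v, hv⟩ := v
    obtain ⟨u', hu'⟩ := u'
    obtain ⟨v', hv'⟩ := v'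
    simp only [Sigma.mk.injEq, Subtype.mk.injEq] at e
    obtain ⟨rfl, e2⟩ := e
    have e3 := eq_of_heq e2
    simp only [Subtype.mk.injEq] at e3
    subst e3
    rfl
  have hcut' : (cutCard (H.induce (Q : Set V)) Y Yᶜ : ℝ) ≤ X.card * d := by exact_mod_cast hcut
  have h2 : α * (16 * min (Nat.card Y : ℝ) (Nat.card ↥(Yᶜ) : ℝ)) ≤ α * w := by
    nlinarith
  have h3 := le_of_mul_le_mul_left h2 hα
  rw [cY, cYc] at h3
  rcases min_choice (((A \ B) ∩ Q).card : ℝ) ((B ∩ Q).card : ℝ) with h | h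
  · left
    rw [h] at h3
    have : 16 * ((A \ B) ∩ Q).card ≤ w := by exact_mod_cast h3
    omega
  · right
    rw [h] at h3
    have : 16 * (B ∩ Q).card ≤ w := by exact_mod_cast h3
    omega

lemma rank_big {V : Type} [Fintype V] (G : SimpleGraph V) (w : ℕ) (hw : 0 < w)
    (Q Q' U P : Finset V) (μ : V → V)
    (hQ : 2 * w ≤ Q.card) (hUQ : U ⊆ Q') (hUc : U.card = w)
    (hPQ : P ⊆ Q') (hPc : P.card = w)
    (hinj : ∀ x ∈ P, ∀ y ∈ P, μ x = μ y → x = y) (hμ : ∀ x ∈ P, μ x ∈ Q ∧ G.Adj x (μ x))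
    (A B : Finset V) (hs : IsSep G A B)
    (h1 : 8 * (A ∩ Q).card ≤ w ∨ 8 * (B ∩ Q).card ≤ w)
    (h2 : 8 * (A ∩ Q').card ≤ w ∨ 8 * (B ∩ Q').card ≤ w)
    (hUA : U ⊆ A) : ¬ (A ∩ Q).card < w := by
  intro hlt
  have hcov : Q.card ≤ (A ∩ Q).card + (B ∩ Q).card := by
    refine le_trans (Finset.card_le_card ?_) (Finset.card_union_le _ _)
    intro x hx
    have := hs.1 x
    simp only [Finset.mem_union, Finset.mem_inter]
    tauto
  have hAQ' : w ≤ (A ∩ Q').card := hUc ▸ Finset.card_le_card (Finset.subset_inter hUA hUQ)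
  have hsplit : P.card ≤ (P.filter (fun x => x ∈ B)).card + (P.filter (fun x => μ x ∈ A)).card := by
    refine le_trans (Finset.card_le_card ?_) (Finset.card_union_le _ _)
    intro x hx
    simp only [Finset.mem_union, Finset.mem_filter]
    by_contra hc
    have hB : x ∉ B := by tauto
    have hA : μ x ∉ A := by tauto
    exact hs.2 x hB (μ x) hA (hμ x hx).2
  have hB : (P.filter (fun x => x ∈ B)).card ≤ (B ∩ Q').card := by
    apply Finset.card_le_card
    intro x hx
    rw [Finset.mem_filter] at hx
    exact Finset.mem_inter.2 ⟨hx.2, hPQ hx.1⟩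
  have hA : (P.filter (fun x => μ x ∈ A)).card ≤ (A ∩ Q).card := by
    apply Finset.card_le_card_of_injOn μ
    · intro x hx
      simp only [Finset.coe_filter, Set.mem_ofPred_eq] at hx
      exact Finset.mem_coe.2 (Finset.mem_inter.2 ⟨hx.2, (hμ x hx.1).1⟩)
    · intro x hx y hy e
      simp only [Finset.coe_filter, Set.mem_ofPred_eq] at hx hy
      exact hinj x hx.1 y hy.1 e
  omega

lemma wellLinked_empty {V : Type} (G : SimpleGraph V) : WellLinked G (∅ ∪ ∅ : Set V) := by
  intro A' A'' hA' hA'' _ _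
  have h1 : A' = ∅ := by simpa using hA'
  have h2 : A'' = ∅ := by simpa using hA''
  subst h1 h2
  refine ⟨id, Function.bijective_id, fun a => a.2.elim, fun a => a.2.elim, fun a => a.2.elim,
    fun a => a.2.elim⟩

lemma pos_S_le {V : Type} {w : ℕ} (P : PathOfSets V 3 w) (i : Fin 3) : P.S i ≤ P.graph :=
  le_trans (le_iSup P.S i) le_sup_left

lemma pos_M_adj {V : Type} {w : ℕ} (P : PathOfSets V 3 w) (i : Fin 3) (b a : V)
    (h : (b, a) ∈ P.M i) : P.graph.Adj b a := by
  obtain ⟨hi, h1, h2⟩ := P.M_mem i _ h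
  have hne : b ≠ a := by
    rintro rfl
    have hij : i ≠ ⟨(i : ℕ) + 1, hi⟩ := by
      intro e
      have := congrArg Fin.val e
      simp at this
    exact Set.disjoint_left.1 (P.VS_disj _ _ hij) (P.B_sub _ h1) (P.A_sub _ h2)
  exact Or.inr ⟨hne, Or.inl ⟨i, h⟩⟩

lemma pos_reach {V : Type} {w : ℕ} (P : PathOfSets V 3 w) (i : Fin 3) (x y : V)
    (hx : x ∈ P.VS i) (hy : y ∈ P.VS i) : P.graph.Reachable x y := by
  have h := (P.S_conn i).preconnected ⟨x, hx⟩ ⟨y, hy⟩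
  have h2 := h.map (SimpleGraph.Embedding.induce (G := P.S i) (P.VS i)).toHom
  exact SimpleGraph.Reachable.mono (pos_S_le P i) h2

lemma pos_main {V : Type} [Fintype V] (w d : ℕ) (α : ℝ) (hα : 0 < α) (hα1 : α < 1)
    (P : PathOfSets V 3 w) (hexp : ∀ i, IsExpander ((P.S i).induce (P.VS i)) α)
    (hdeg : DegLE P.graph d) (hw : 0 < w) (hd : 0 < d) (m : ℕ) (hm : 32 * d * (m : ℝ) ≤ α * w) :
    ∃ A1 B3 : Set V, A1 ⊆ P.A 0 ∧ B3 ⊆ P.B 2 ∧ Nat.card ↥A1 = m ∧ Nat.card ↥B3 = m ∧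
      WellLinked P.graph (A1 ∪ B3) := by
  let Q : Fin 3 → Finset V := fun i => (P.VS i).toFinset
  have cardA : ∀ i, (P.A i).toFinset.card = w := fun i => by
    rw [Set.toFinset_card, ← Nat.card_eq_fintype_card]; exact P.A_card i
  have cardB : ∀ i, (P.B i).toFinset.card = w := fun i => by
    rw [Set.toFinset_card, ← Nat.card_eq_fintype_card]; exact P.B_card i
  have AQ : ∀ i, (P.A i).toFinset ⊆ Q i := fun i => Set.toFinset_mono (P.A_sub i)
  have BQ : ∀ i, (P.B i).toFinset ⊆ Q i := fun i => Set.toFinset_mono (P.B_sub i)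
  have hQ : ∀ i, 2 * w ≤ (Q i).card := by
    intro i
    have h1 : Disjoint (P.A i).toFinset (P.B i).toFinset := by
      rw [Set.disjoint_toFinset]; exact P.AB_disj i
    have h2 := Finset.card_le_card (Finset.union_subset (AQ i) (BQ i))
    rw [Finset.card_union_of_disjoint h1, cardA, cardB] at h2
    omega
  have hT : ∀ i, ∀ A B : Finset V, IsSep P.graph A B → (A ∩ B).card < 2 * m →
      8 * (A ∩ Q i).card ≤ w ∨ 8 * (B ∩ Q i).card ≤ w := by
    intro i A B hs ho
    refine expander_dichotomy P.graph (P.S i) (pos_S_le P i) (Q i) w d α hα hα1 hd ?_ hdeg A B hs ?_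
    · have e : ((Q i : Finset V) : Set V) = P.VS i := Set.coe_toFinset _
      rw [e]; exact hexp i
    · have h1 : ((A ∩ B).card : ℝ) ≤ 2 * m := by exact_mod_cast ho.le
      have h2 : (0 : ℝ) ≤ d := by positivity
      nlinarith
  -- matchings
  have hμ0 : ∀ b, ∃ a, b ∈ P.B 0 → (b, a) ∈ P.M 0 := by
    intro b
    by_cases hb : b ∈ P.B 0
    · obtain ⟨a, ha, _⟩ := P.M_match₁ 0 (by decide) b hb
      exact ⟨a, fun _ => ha⟩
    · exact ⟨b, fun h => absurd h hb⟩
  choose μ hμ using hμ0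
  have hν0 : ∀ a, ∃ b, a ∈ P.A 2 → (b, a) ∈ P.M 1 := by
    intro a
    by_cases ha : a ∈ P.A 2
    · obtain ⟨b, hb, _⟩ := P.M_match₂ 1 (by decide) a ha
      exact ⟨b, fun _ => hb⟩
    · exact ⟨a, fun h => absurd h ha⟩
  choose ν hν using hν0
  have hU0 : ∀ A B : Finset V, IsSep P.graph A B → (A ∩ B).card < 2 * m →
      (P.A 0).toFinset ⊆ A → ¬ (A ∩ Q 1).card < w := by
    intro A B hs ho hUA
    refine rank_big P.graph w hw (Q 1) (Q 0) (P.A 0).toFinset (P.B 0).toFinset μ (hQ 1) (AQ 0)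
      (cardA 0) (BQ 0) (cardB 0) ?_ ?_ A B hs (hT 1 A B hs ho) (hT 0 A B hs ho) hUA
    · intro x hx y hy e
      rw [Set.mem_toFinset] at hx hy
      have h1 := hμ x hx
      have h2 := hμ y hy
      rw [← e] at h2
      obtain ⟨_, _, h3⟩ := P.M_mem 0 _ h1
      exact (P.M_match₂ 0 (by decide) _ h3).unique h1 h2
    · intro x hx
      rw [Set.mem_toFinset] at hx
      have h1 := hμ x hx
      obtain ⟨_, _, h3⟩ := P.M_mem 0 _ h1
      exact ⟨AQ 1 (by rw [Set.mem_toFinset]; exact h3), pos_M_adj P 0 _ _ h1⟩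
  have hU2 : ∀ A B : Finset V, IsSep P.graph A B → (A ∩ B).card < 2 * m →
      (P.B 2).toFinset ⊆ A → ¬ (A ∩ Q 1).card < w := by
    intro A B hs ho hUA
    refine rank_big P.graph w hw (Q 1) (Q 2) (P.B 2).toFinset (P.A 2).toFinset ν (hQ 1) (BQ 2)
      (cardB 2) (AQ 2) (cardA 2) ?_ ?_ A B hs (hT 1 A B hs ho) (hT 2 A B hs ho) hUA
    · intro x hx y hy e
      rw [Set.mem_toFinset] at hx hy
      have h1 := hν x hx
      have h2 := hν y hy
      rw [← e] at h2
      obtain ⟨_, h3, _⟩ := P.M_mem 1 _ h1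
      exact (P.M_match₁ 1 (by decide) _ h3).unique h1 h2
    · intro x hx
      rw [Set.mem_toFinset] at hx
      have h1 := hν x hx
      obtain ⟨_, h3, _⟩ := P.M_mem 1 _ h1
      exact ⟨BQ 1 (by rw [Set.mem_toFinset]; exact h3), (pos_M_adj P 1 _ _ h1).symm⟩
  have hI0 : Indep P.graph (Q 1) w ∅ := by
    intro A B _ _ _; simp
  obtain ⟨J, hJ1, _, hJ3, hJ4⟩ := indep_build P.graph (Q 1) w (2 * m) hw (hQ 1) (hT 1) _ hU0 ∅ hI0 m
    (by simp; omega)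
  rw [Finset.empty_union] at hJ4
  obtain ⟨K, hK1, _, hK3, hK4⟩ := indep_build P.graph (Q 1) w (2 * m) hw (hQ 1) (hT 1) _ hU2 J hJ4 m
    (by omega)
  refine ⟨J, K, ?_, ?_, by simpa using hJ3, by simpa using hK3, ?_⟩
  · intro x hx; exact Set.mem_toFinset.1 (hJ1 hx)
  · intro x hx; exact Set.mem_toFinset.1 (hK1 hx)
  · rw [← Finset.coe_union]
    refine wellLinked_of_indep P.graph (Q 1) w (2 * m) hw (hQ 1) (hT 1) _ hK4 ?_
    have := Finset.card_union_le J K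
    omega

end helpers

/-- Well-linked sets from an expanding Path-of-Sets System of length 3: there is a
universal `c > 0` such that every `α`-expanding Path-of-Sets System of width `w` and
length `3` whose graph has maximum degree at most `d` admits subsets `Â₁ ⊆ A₁`,
`B̂₃ ⊆ B₃` of at least `c·α²·w/d³` vertices each with `Â₁ ∪ B̂₃` well-linked in `G_Σ`. -/
theorem expanding_pos_gives_well_linked :
    ∃ c : ℝ, 0 < c ∧
      ∀ (V : Type) [Fintype V] (w d : ℕ) (α : ℝ), 0 < α → α < 1 →
        ∀ P : PathOfSets V 3 w,
          (∀ i, IsExpander ((P.S i).induce (P.VS i)) α) →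
          DegLE P.graph d →
          ∃ A1 B3 : Set V, A1 ⊆ P.A 0 ∧ B3 ⊆ P.B 2 ∧
            c * α ^ 2 * w / d ^ 3 ≤ (Nat.card ↥A1 : ℝ) ∧
            c * α ^ 2 * w / d ^ 3 ≤ (Nat.card ↥B3 : ℝ) ∧
            WellLinked P.graph (A1 ∪ B3) := by
  refine ⟨1 / 64, by norm_num, ?_⟩
  intro V _ w d α hα hα1 P hexp hdeg
  by_cases h0 : w = 0 ∨ d = 0
  · refine ⟨∅, ∅, Set.empty_subset _, Set.empty_subset _, ?_, ?_, wellLinked_empty _⟩ <;>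
      rcases h0 with rfl | rfl <;> simp
  push Not at h0
  have hw : 0 < w := Nat.pos_of_ne_zero h0.1
  have hd : 0 < d := Nat.pos_of_ne_zero h0.2
  have hdR : (1 : ℝ) ≤ d := by exact_mod_cast hd
  have hwR : (1 : ℝ) ≤ w := by exact_mod_cast hw
  set y : ℝ := α * w / (32 * d) with hy
  have hyy : 32 * d * y = α * w := by rw [hy]; field_simp
  have hbound : 1 / 64 * α ^ 2 * w / d ^ 3 ≤ y / 2 := by
    rw [div_le_iff₀ (by positivity)]
    have h1 : (d : ℝ) ≤ d ^ 3 := le_self_pow₀ hdR (by norm_num)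
    have h2 : α ^ 2 * w ≤ α * w := by
      have : α ^ 2 ≤ α := by nlinarith
      nlinarith
    have h3 : 0 ≤ y := by positivity
    nlinarith
  by_cases h1 : y < 1
  · have hA : (P.A 0).Nonempty := by
      rw [Set.nonempty_iff_ne_empty]; intro e
      have := P.A_card 0
      rw [e] at this; simp at this; omega
    have hB : ∀ i, (P.B i).Nonempty := by
      intro i
      rw [Set.nonempty_iff_ne_empty]; intro e
      have := P.B_card i
      rw [e] at this; simp at this; omega
    obtain ⟨a, ha⟩ := hA
    obtain ⟨b, hb⟩ := hB 2
    obtain ⟨b0, hb0⟩ := hB 0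
    obtain ⟨b1, hb1⟩ := hB 1
    obtain ⟨a1, ha1, _⟩ := P.M_match₁ 0 (by decide) b0 hb0
    obtain ⟨a2, ha2, _⟩ := P.M_match₁ 1 (by decide) b1 hb1
    obtain ⟨_, _, ha1'⟩ := P.M_mem 0 _ ha1
    obtain ⟨_, _, ha2'⟩ := P.M_mem 1 _ ha2
    have hr : P.graph.Reachable a b :=
      (pos_reach P 0 a b0 (P.A_sub 0 ha) (P.B_sub 0 hb0)).trans <|
      (pos_M_adj P 0 _ _ ha1).reachable.trans <|
      (pos_reach P 1 a1 b1 (P.A_sub 1 ha1') (P.B_sub 1 hb1)).trans <|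
      (pos_M_adj P 1 _ _ ha2).reachable.trans <|
      (pos_reach P 2 a2 b (P.A_sub 2 ha2') (P.B_sub 2 hb))
    refine ⟨{a}, {b}, by simpa using ha, by simpa using hb, ?_, ?_, wellLinked_pair _ a b hr⟩ <;>
    · simp only [Nat.card_unique, Nat.cast_one]
      linarith
  · push Not at h1
    have hf := Nat.floor_le (show 0 ≤ y by linarith)
    have hf2 := Nat.lt_floor_add_one y
    have hf3 : (1 : ℝ) ≤ ⌊y⌋₊ := by exact_mod_cast (Nat.one_le_floor_iff y).2 h1
    obtain ⟨A1, B3, hA, hB, cA, cB, hwl⟩ := pos_main w d α hα hα1 P hexp hdeg hw hd ⌊y⌋₊ (by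
      rw [← hyy]; gcongr)
    refine ⟨A1, B3, hA, hB, ?_, ?_, hwl⟩
    · rw [cA]; linarith
    · rw [cB]; linarith
end

section
/- There is a constant c₀ > 0 such that the following holds. Let Π be a Path-of-Expanders System with expansion α and width w whose corresponding graph G_Π has maximum vertex degree at most d and satisfies |V(G_Π)| ≤ n for some n > c₀. Then every graph H with maximum vertex degree at most 3 and |V(H)| ≤ w²·α² / (2¹⁹·d⁴·n·log₂ n) is a minor of G_Π. -/
/-- A Path-of-Expanders System of width `w` and expansion `α`: a Strong Path-of-Sets
System of length `6` and width `w` (strong: each `A i ∪ B i` is well-linked in the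
cluster `S i`), together with six further pairwise disjoint connected `α`-expanders
`T i` (on vertex sets `TV i`, disjoint from all clusters), sets `Ct i ⊆ TV i` of `w`
vertices, and perfect matchings `M' i` between `B i` and `Ct i`. The ambient vertex type
consists exactly of the vertices of the system. -/
structure PathOfExpanders (V : Type) (w : ℕ) (α : ℝ) extends PathOfSets V 6 w where
  strong : ∀ i, WellLinked (S i) (A i ∪ B i)
  TV : Fin 6 → Set V
  T : Fin 6 → SimpleGraph V
  TV_disj : ∀ i j, i ≠ j → Disjoint (TV i) (TV j)
  TV_VS_disj : ∀ i j, Disjoint (TV i) (VS j)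
  T_supp : ∀ i u v, (T i).Adj u v → u ∈ TV i ∧ v ∈ TV i
  T_conn : ∀ i, ((T i).induce (TV i)).Connected
  T_exp : ∀ i, IsExpander ((T i).induce (TV i)) α
  Ct : Fin 6 → Set V
  Ct_sub : ∀ i, Ct i ⊆ TV i
  Ct_card : ∀ i, Nat.card ↥(Ct i) = w
  M' : Fin 6 → Set (V × V)
  M'_mem : ∀ i p, p ∈ M' i → p.1 ∈ B i ∧ p.2 ∈ Ct i
  M'_match₁ : ∀ i, ∀ b ∈ B i, ∃! c : V, (b, c) ∈ M' i
  M'_match₂ : ∀ i, ∀ c ∈ Ct i, ∃! b : V, (b, c) ∈ M' i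
  cover : (⋃ i, VS i) ∪ (⋃ i, TV i) = (Set.univ : Set V)

/-- The graph `G_Π` corresponding to a Path-of-Expanders System: the union of `G_Σ`,
the expanders `T₁,…,T₆`, and all matching edges of `M'`. -/
def PathOfExpanders.graph {V : Type} {w : ℕ} {α : ℝ} (P : PathOfExpanders V w α) :
    SimpleGraph V :=
  P.toPathOfSets.graph ⊔ (⨆ i, P.T i) ⊔
    SimpleGraph.fromRel (fun u v => ∃ i, (u, v) ∈ P.M' i)

open Classical in
/-- number of ordered adjacent pairs between two finsets -/
noncomputable def eN {V : Type*} (G : SimpleGraph V) (X Y : Finset V) : ℕ :=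
  ((X ×ˢ Y).filter fun p => G.Adj p.1 p.2).card

theorem eN_mono {V : Type*} (G : SimpleGraph V) {X Y X' Y' : Finset V}
    (hX : X ⊆ X') (hY : Y ⊆ Y') : eN G X Y ≤ eN G X' Y' := by
  classical
  unfold eN
  apply Finset.card_le_card
  apply Finset.filter_subset_filter
  exact Finset.product_subset_product hX hY

theorem eN_union_left {V : Type*} [DecidableEq V] (G : SimpleGraph V) (X Y Z : Finset V) :
    eN G (X ∪ Y) Z ≤ eN G X Z + eN G Y Z := by
  classical
  unfold eN
  refine le_trans (Finset.card_le_card ?_) (Finset.card_union_le _ _)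
  intro p
  simp only [Finset.mem_filter, Finset.mem_product, Finset.mem_union]
  tauto

theorem eN_union_right {V : Type*} [DecidableEq V] (G : SimpleGraph V) (X Y Z : Finset V) :
    eN G X (Y ∪ Z) ≤ eN G X Y + eN G X Z := by
  classical
  unfold eN
  refine le_trans (Finset.card_le_card ?_) (Finset.card_union_le _ _)
  intro p
  simp only [Finset.mem_filter, Finset.mem_product, Finset.mem_union]
  tauto

theorem eN_le_right {V : Type*} [Fintype V] (G : SimpleGraph V) {d : ℕ} (hd : DegLE G d)
    (X Y : Finset V) : eN G X Y ≤ d * Y.card := by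
  classical
  unfold eN
  refine Finset.card_le_mul_card_image_of_maps_to (f := Prod.snd) (t := Y) ?_ d ?_
  · intro p hp
    simp only [Finset.mem_filter, Finset.mem_product] at hp
    exact hp.1.2
  · intro y _
    refine le_trans ?_ (hd y)
    rw [Nat.card_eq_card_toFinset]
    apply Finset.card_le_card_of_injOn Prod.fst
    · intro p hp
      simp only [Finset.coe_filter, Finset.mem_filter, Finset.mem_product, Set.mem_ofPred_eq] at hp
      simp only [Set.coe_toFinset, Set.mem_ofPred_eq]
      rw [← hp.2]
      exact hp.1.2.symm
    · intro p hp q hq h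
      simp only [Finset.coe_filter, Finset.mem_filter, Finset.mem_product, Set.mem_ofPred_eq] at hp hq
      exact Prod.ext h (hp.2.trans hq.2.symm)

theorem exp_eN {V : Type*} [Fintype V] [DecidableEq V] (G : SimpleGraph V) {α : ℝ}
    (h : IsExpander G α) (A : Finset V) (hA : A.Nonempty) (hA' : Aᶜ.Nonempty) :
    α * (min (A.card : ℝ) (Aᶜ.card : ℝ)) ≤ eN G A Aᶜ := by
  classical
  have := h (A : Set V) (by simpa using hA) (by rw [← Finset.coe_compl]; exact Finset.coe_nonempty.2 hA')
  rw [← Finset.coe_compl] at this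
  simp only [Nat.card_eq_card_toFinset, Finset.toFinset_coe] at this
  refine this.trans (le_of_eq ?_)
  unfold cutCard eN
  norm_cast
  rw [Nat.card_eq_fintype_card, Fintype.card_subtype]
  congr 1
  ext p
  simp [and_assoc]

/-- ball growth -/
theorem ball_growth {V : Type*} [Fintype V] [DecidableEq V] (G : SimpleGraph V) {d : ℕ}
    (hd : DegLE G d) (hd0 : 0 < d) (U : Finset V) {β : ℝ} (hβ : 0 < β)
    (hU : ∀ X ⊆ U, X.Nonempty → 2 * X.card ≤ U.card → β * X.card ≤ eN G X (U \ X))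
    (x : V) (hx : x ∈ U) (k : ℕ) :
    ∃ X ⊆ U, x ∈ X ∧ (U.card < 2 * X.card ∨ (1 + β / d) ^ k ≤ (X.card : ℝ)) ∧
      ∀ y ∈ X, ∃ P : Finset V, P ⊆ U ∧ x ∈ P ∧ y ∈ P ∧ P.card ≤ k + 1 ∧
        (G.induce (P : Set V)).Connected := by
  classical
  induction k with
  | zero =>
    refine ⟨{x}, by simpa using hx, by simp, Or.inr (by simp), ?_⟩
    intro y hy
    refine ⟨{x}, by simpa using hx, by simp, by simpa using hy, by simp, ?_⟩
    rw [Finset.coe_singleton]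
    exact SimpleGraph.Connected.of_subsingleton
  | succ k ih =>
    obtain ⟨X, hXU, hxX, hcard, hP⟩ := ih
    set N := (U \ X).filter (fun y => ∃ z ∈ X, G.Adj z y) with hN
    refine ⟨X ∪ N, ?_, by simp [hxX], ?_, ?_⟩
    · apply Finset.union_subset hXU
      exact (Finset.filter_subset _ _).trans Finset.sdiff_subset
    · have hdisj : Disjoint X N := by
        rw [Finset.disjoint_left]
        intro a ha haN
        simp [hN] at haN
        exact haN.1.2 ha
      have hc : (X ∪ N).card = X.card + N.card := Finset.card_union_of_disjoint hdisj
      by_cases h2 : U.card < 2 * X.card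
      · left; omega
      · right
        have h1 := hcard.resolve_left h2
        have h3 := hU X hXU ⟨x, hxX⟩ (by omega)
        have h4 : eN G X (U \ X) ≤ eN G X N := by
          unfold eN
          apply Finset.card_le_card
          intro p
          simp only [hN, Finset.mem_filter, Finset.mem_product]
          rintro ⟨⟨a, b⟩, c⟩
          exact ⟨⟨a, b, p.1, a, c⟩, c⟩
        have h5 := h4.trans (eN_le_right G hd X N)
        have h6 : β * X.card ≤ d * N.card := h3.trans (by exact_mod_cast h5)
        have hd0' : (0 : ℝ) < d := by exact_mod_cast hd0
        have h7 : β / d * X.card ≤ N.card := by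
          rw [div_mul_eq_mul_div, div_le_iff₀ hd0']
          linarith
        rw [hc]
        push_cast
        calc (1 + β / d) ^ (k + 1) = (1 + β / d) ^ k * (1 + β / d) := pow_succ _ _
          _ ≤ X.card * (1 + β / d) := by
            apply mul_le_mul_of_nonneg_right h1
            positivity
          _ ≤ _ := by linarith
    · intro y hy
      rcases Finset.mem_union.1 hy with hy | hy
      · obtain ⟨P, a, b, c, e, f⟩ := hP y hy
        exact ⟨P, a, b, c, by omega, f⟩
      · simp only [hN, Finset.mem_filter, Finset.mem_sdiff] at hy
        obtain ⟨⟨hyU, _⟩, z, hz, hzy⟩ := hy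
        obtain ⟨P, a, b, c, e, f⟩ := hP z hz
        refine ⟨P ∪ {z, y}, ?_, by simp [b], by simp, ?_, ?_⟩
        · intro t ht
          simp only [Finset.mem_union, Finset.mem_insert, Finset.mem_singleton] at ht
          rcases ht with ht | rfl | rfl
          · exact a ht
          · exact hXU hz
          · exact hyU
        · have : P ∪ {z, y} = insert y P := by
            ext t
            simp only [Finset.mem_union, Finset.mem_insert, Finset.mem_singleton]
            constructor
            · rintro (h | rfl | rfl)
              · exact Or.inr h
              · exact Or.inr c
              · exact Or.inl rfl
            · tauto
          rw [this]
          exact (Finset.card_insert_le _ _).trans (by omega)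
        · rw [Finset.coe_union]
          apply SimpleGraph.induce_union_connected f.preconnected
          · have := (SimpleGraph.induce_pair_connected_of_adj hzy).preconnected
            rwa [show ((({z, y} : Finset V)) : Set V) = {z, y} by simp]
          · exact ⟨z, by simpa using c⟩

theorem short_connect {V : Type*} [Fintype V] [DecidableEq V] (G : SimpleGraph V) {d : ℕ}
    (hd : DegLE G d) (hd0 : 0 < d) (U : Finset V) {β : ℝ} (hβ : 0 < β)
    (hU : ∀ X ⊆ U, X.Nonempty → 2 * X.card ≤ U.card → β * X.card ≤ eN G X (U \ X))
    (k : ℕ) (hk : (Fintype.card V : ℝ) ≤ (1 + β / d) ^ k)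
    (x y : V) (hx : x ∈ U) (hy : y ∈ U) :
    ∃ P : Finset V, P ⊆ U ∧ x ∈ P ∧ y ∈ P ∧ P.card ≤ 2 * k + 2 ∧
        (G.induce (P : Set V)).Connected := by
  classical
  have key : ∀ z ∈ U, ∃ X ⊆ U, U.card < 2 * X.card ∧
      ∀ y ∈ X, ∃ P : Finset V, P ⊆ U ∧ z ∈ P ∧ y ∈ P ∧ P.card ≤ k + 1 ∧
        (G.induce (P : Set V)).Connected := by
    intro z hz
    obtain ⟨X, hXU, hzX, hc, hP⟩ := ball_growth G hd hd0 U hβ hU z hz k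
    refine ⟨X, hXU, ?_, hP⟩
    rcases hc with hc | hc
    · exact hc
    · have h1 : Fintype.card V ≤ X.card := by exact_mod_cast hk.trans hc
      have h2 : U.card ≤ Fintype.card V := Finset.card_le_univ U
      have h3 : 0 < X.card := Finset.card_pos.2 ⟨z, hzX⟩
      omega
  obtain ⟨X, hXU, hXc, hX⟩ := key x hx
  obtain ⟨Y, hYU, hYc, hY⟩ := key y hy
  have : ¬ Disjoint X Y := by
    intro hdis
    have h1 := Finset.card_union_of_disjoint hdis
    have h2 := Finset.card_le_card (Finset.union_subset hXU hYU)
    omega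
  rw [Finset.not_disjoint_iff] at this
  obtain ⟨z, hzX, hzY⟩ := this
  obtain ⟨P, a, b, c, e, f⟩ := hX z hzX
  obtain ⟨Q, a', b', c', e', f'⟩ := hY z hzY
  refine ⟨P ∪ Q, Finset.union_subset a a', by simp [b], by simp [b'], ?_, ?_⟩
  · exact (Finset.card_union_le _ _).trans (by omega)
  · rw [Finset.coe_union]
    exact SimpleGraph.induce_union_connected f.preconnected f'.preconnected ⟨z, by simpa using ⟨c, c'⟩⟩

/-- a state of the greedy embedding -/
structure GoodState {V W : Type*} [Fintype V] [DecidableEq V] (G : SimpleGraph V)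
    (H : SimpleGraph W) (α : ℝ) (s : ℕ) (D : Finset V) (K : Finset W) (φ : W → Finset V) :
    Prop where
  conn : ∀ u ∈ K, (G.induce (φ u : Set V)).Connected
  size : ∀ u ∈ K, (φ u).card ≤ s
  disjD : ∀ u ∈ K, Disjoint (φ u) D
  disj : ∀ u ∈ K, ∀ v ∈ K, u ≠ v → Disjoint (φ u) (φ v)
  adj : ∀ u ∈ K, ∀ v ∈ K, H.Adj u v → ∃ a ∈ φ u, ∃ b ∈ φ v, G.Adj a b
  cut : (eN G D (D ∪ K.biUnion φ)ᶜ : ℝ) ≤ α / 4 * D.card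
  half : 2 * D.card ≤ Fintype.card V

theorem compl_eq_aux {V : Type*} [Fintype V] [DecidableEq V] (D B : Finset V) :
    Dᶜ ⊆ (D ∪ B)ᶜ ∪ B := by
  intro x
  simp only [Finset.mem_compl, Finset.mem_union]
  tauto

theorem embed_core {V W : Type*} [Fintype V] [DecidableEq V] [Fintype W] [DecidableEq W]
    (G : SimpleGraph V) (H : SimpleGraph W) {α : ℝ} (hα : 0 < α) {d : ℕ} (hd0 : 0 < d)
    (hd : DegLE G d) (hexp : IsExpander G α) (hα1 : α ≤ d) (hV : 0 < Fintype.card V)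
    (hH : DegLE H 3) (k : ℕ)
    (hk : (Fintype.card V : ℝ) ≤ (1 + (α / 4) / d) ^ k)
    (hsize : 16 * (d * ((Fintype.card W : ℝ) * (8 * k + 8))) ≤ α * Fintype.card V) :
    IsMinor H G := by
  classical
  set s := 8 * k + 8 with hs
  -- pick a maximal state
  let f : Finset V × Finset W × (W → Finset V) → ℕ :=
    fun t => t.1.card * (Fintype.card W + 1) + t.2.1.card
  let S : Finset (Finset V × Finset W × (W → Finset V)) :=
    Finset.univ.filter (fun t => GoodState G H α s t.1 t.2.1 t.2.2)
  have hSne : S.Nonempty := by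
    refine ⟨(∅, ∅, fun _ => ∅), ?_⟩
    simp only [S, Finset.mem_filter, Finset.mem_univ, true_and]
    constructor <;> simp [eN]
  obtain ⟨⟨D, K, φ⟩, hmem, hmax⟩ := Finset.exists_max_image S f hSne
  have hg : GoodState G H α s D K φ := by
    simpa [S] using hmem
  have hmax' : ∀ D' K' φ', GoodState G H α s D' K' φ' → f (D', K', φ') ≤ f (D, K, φ) := by
    intro D' K' φ' h
    apply hmax
    simpa [S] using h
  have hnoD : ∀ D' K' φ', GoodState G H α s D' K' φ' → D'.card ≤ D.card := by
    intro D' K' φ' h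
    have h1 := hmax' D' K' φ' h
    simp only [f] at h1
    have h2 : K.card ≤ Fintype.card W := Finset.card_le_univ K
    by_contra hlt
    push Not at hlt
    have h3 : (D.card + 1) * (Fintype.card W + 1) ≤ D'.card * (Fintype.card W + 1) :=
      Nat.mul_le_mul_right _ hlt
    rw [add_mul] at h3
    omega
  have hnoK : ∀ K' φ', GoodState G H α s D K' φ' → K'.card ≤ K.card := by
    intro K' φ' h
    have h1 := hmax' D K' φ' h
    simp only [f] at h1
    omega
  set B := K.biUnion φ with hB
  set U := (D ∪ B)ᶜ with hU
  set N : ℝ := ((Fintype.card V : ℕ) : ℝ) with hN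
  have hNpos : 0 < N := by rw [hN]; exact_mod_cast hV
  have hd0' : (0 : ℝ) < d := by exact_mod_cast hd0
  -- size bounds
  have hBc : B.card ≤ Fintype.card W * s := by
    calc B.card ≤ K.card * s := Finset.card_biUnion_le_card_mul _ _ _ hg.size
      _ ≤ _ := Nat.mul_le_mul_right _ (Finset.card_le_univ K)
  have hBd : 16 * (d * (B.card : ℝ)) ≤ α * N := by
    have h1 : (B.card : ℝ) ≤ (Fintype.card W : ℝ) * (8 * k + 8) := by
      have : ((B.card : ℕ) : ℝ) ≤ ((Fintype.card W * s : ℕ) : ℝ) := by exact_mod_cast hBc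
      rw [hs] at this
      push_cast at this
      exact this
    have h2 : (d : ℝ) * B.card ≤ d * ((Fintype.card W : ℝ) * (8 * k + 8)) :=
      mul_le_mul_of_nonneg_left h1 hd0'.le
    linarith
  have hBN : 16 * (B.card : ℝ) ≤ N := by
    have h1 : (d : ℝ) * (16 * B.card) ≤ d * N := by
      have := mul_le_mul_of_nonneg_right hα1 hNpos.le
      linarith
    exact le_of_mul_le_mul_left h1 hd0'
  have hcompl : ∀ D' : Finset V, ((D'ᶜ).card : ℝ) = N - D'.card := by
    intro D'
    rw [Finset.card_compl, Nat.cast_sub (Finset.card_le_univ D')]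
  have hcutbound : ∀ D' : Finset V, (eN G D' (D' ∪ B)ᶜ : ℝ) ≤ α / 4 * D'.card →
      (eN G D' D'ᶜ : ℝ) ≤ α / 4 * D'.card + d * B.card := by
    intro D' h
    have h1 : eN G D' D'ᶜ ≤ eN G D' (D' ∪ B)ᶜ + eN G D' B :=
      (eN_mono G (Finset.Subset.refl _) (compl_eq_aux D' B)).trans (eN_union_right G _ _ _)
    have h2 := eN_le_right G hd D' B
    have h3 : (eN G D' D'ᶜ : ℝ) ≤ eN G D' (D' ∪ B)ᶜ + (d * B.card : ℕ) := by
      exact_mod_cast h1.trans (by omega)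
    push_cast at h3
    linarith
  have hDN : 12 * (D.card : ℝ) ≤ N := by
    rcases D.eq_empty_or_nonempty with h0 | hne
    · rw [h0]; simp [hNpos.le]
    · have hh : 2 * (D.card : ℝ) ≤ N := by rw [hN]; exact_mod_cast hg.half
      have hc := hcompl D
      have hcn : (Dᶜ).Nonempty := by
        rw [← Finset.card_pos]
        have : (0 : ℝ) < (Dᶜ).card := by rw [hc]; linarith
        exact_mod_cast this
      have h1 := exp_eN G hexp D hne hcn
      rw [min_eq_left (by rw [hc]; linarith)] at h1
      have h2 := hcutbound D hg.cut
      have h3 : α * (12 * D.card) ≤ α * N := by linarith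
      exact le_of_mul_le_mul_left h3 hα
  have hUc : (U.card : ℝ) ≥ N - D.card - B.card := by
    rw [hU, hcompl]
    have : ((D ∪ B).card : ℝ) ≤ D.card + B.card := by exact_mod_cast Finset.card_union_le D B
    linarith
  have hUN : (U.card : ℝ) ≤ N := by rw [hN]; exact_mod_cast Finset.card_le_univ U
  have hUpos : 0 < U.card := by
    have : (0 : ℝ) < U.card := by linarith
    exact_mod_cast this
  -- expansion of U
  have hUexp : ∀ X ⊆ U, X.Nonempty → 2 * X.card ≤ U.card →
      α / 4 * X.card ≤ eN G X (U \ X) := by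
    intro X hXU hXne hXc
    by_contra hlt
    push Not at hlt
    have hDX : Disjoint D X := by
      rw [Finset.disjoint_right]
      intro a ha
      have := hXU ha
      simp only [hU, Finset.mem_compl, Finset.mem_union] at this
      tauto
    have hcard : (D ∪ X).card = D.card + X.card := Finset.card_union_of_disjoint hDX
    have hXpos : 0 < X.card := Finset.card_pos.2 hXne
    have hcard' : ((D ∪ X).card : ℝ) = D.card + X.card := by exact_mod_cast hcard
    have hset : ((D ∪ X) ∪ B)ᶜ = U \ X := by
      ext a
      simp only [hU, Finset.mem_compl, Finset.mem_union, Finset.mem_sdiff]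
      tauto
    have hcut : (eN G (D ∪ X) ((D ∪ X) ∪ B)ᶜ : ℝ) ≤ α / 4 * (D ∪ X).card := by
      rw [hset, hcard']
      have h1 := eN_union_left G D X (U \ X)
      have h2 : eN G D (U \ X) ≤ eN G D U := eN_mono G (Finset.Subset.refl _) Finset.sdiff_subset
      have h3 : (eN G (D ∪ X) (U \ X) : ℝ) ≤ eN G D U + eN G X (U \ X) := by
        exact_mod_cast h1.trans (by omega)
      have h4 := hg.cut
      linarith
    by_cases hhalf : 2 * (D ∪ X).card ≤ Fintype.card V
    · have : GoodState G H α s (D ∪ X) K φ := by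
        refine ⟨hg.conn, hg.size, ?_, hg.disj, hg.adj, hcut, hhalf⟩
        intro u hu
        rw [Finset.disjoint_union_right]
        refine ⟨hg.disjD u hu, ?_⟩
        rw [Finset.disjoint_left]
        intro a ha haX
        have := hXU haX
        simp only [hU, hB, Finset.mem_compl, Finset.mem_union, Finset.mem_biUnion] at this
        exact this (Or.inr ⟨u, hu, ha⟩)
      have := hnoD _ _ _ this
      omega
    · have hh : N < 2 * ((D ∪ X).card : ℝ) := by
        rw [hN]
        push Not at hhalf
        exact_mod_cast hhalf
      have hXc' : 2 * (X.card : ℝ) ≤ U.card := by exact_mod_cast hXc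
      have hc := hcompl (D ∪ X)
      have hcn : ((D ∪ X)ᶜ).Nonempty := by
        rw [← Finset.card_pos]
        have : (0 : ℝ) < ((D ∪ X)ᶜ).card := by rw [hc]; linarith
        exact_mod_cast this
      have h1 := exp_eN G hexp (D ∪ X) (hXne.mono Finset.subset_union_right) hcn
      rw [min_eq_right (by rw [hc]; linarith), hc] at h1
      have h2 := hcutbound (D ∪ X) hcut
      have h3 : ((D ∪ X).card : ℝ) ≤ 7 / 12 * N := by linarith
      have h4 : α * ((D ∪ X).card : ℝ) ≤ α * (7 / 12 * N) := mul_le_mul_of_nonneg_left h3 hα.le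
      have h5 : 0 < α * N := mul_pos hα hNpos
      linarith
  -- every embedded vertex has a neighbour in U
  have hnb : ∀ u ∈ K, ∃ a ∈ φ u, ∃ x ∈ U, G.Adj a x := by
    intro u hu
    by_contra hno
    push Not at hno
    have hφne : (φ u).Nonempty := by
      obtain ⟨⟨a, ha⟩⟩ := (hg.conn u hu).nonempty
      exact ⟨a, ha⟩
    have hφpos : 0 < (φ u).card := Finset.card_pos.2 hφne
    have hdj : Disjoint D (φ u) := (hg.disjD u hu).symm
    have hcard : (D ∪ φ u).card = D.card + (φ u).card := Finset.card_union_of_disjoint hdj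
    have hcard' : ((D ∪ φ u).card : ℝ) = D.card + (φ u).card := by exact_mod_cast hcard
    have hφB : φ u ⊆ B := by
      rw [hB]; exact Finset.subset_biUnion_of_mem φ hu
    have hφc : ((φ u).card : ℝ) ≤ B.card := by exact_mod_cast Finset.card_le_card hφB
    have hset : ((D ∪ φ u) ∪ (K.erase u).biUnion φ)ᶜ = U := by
      rw [hU]
      congr 1
      rw [Finset.union_assoc, hB, ← Finset.biUnion_insert, Finset.insert_erase hu]
    have : GoodState G H α s (D ∪ φ u) (K.erase u) φ := by
      refine ⟨fun v hv => hg.conn v (Finset.mem_of_mem_erase hv),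
        fun v hv => hg.size v (Finset.mem_of_mem_erase hv), ?_,
        fun v hv v' hv' => hg.disj v (Finset.mem_of_mem_erase hv) v' (Finset.mem_of_mem_erase hv'),
        fun v hv v' hv' => hg.adj v (Finset.mem_of_mem_erase hv) v' (Finset.mem_of_mem_erase hv'),
        ?_, ?_⟩
      · intro v hv
        rw [Finset.disjoint_union_right]
        exact ⟨hg.disjD v (Finset.mem_of_mem_erase hv),
          hg.disj v (Finset.mem_of_mem_erase hv) u hu (Finset.ne_of_mem_erase hv)⟩
      · rw [hset, hcard']
        have h1 := eN_union_left G D (φ u) U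
        have h2 : eN G (φ u) U = 0 := by
          unfold eN
          rw [Finset.card_eq_zero, Finset.filter_eq_empty_iff]
          rintro ⟨a, b⟩ hab
          rw [Finset.mem_product] at hab
          exact hno a hab.1 b hab.2
        have h3 : (eN G (D ∪ φ u) U : ℝ) ≤ eN G D U := by
          exact_mod_cast h1.trans (by omega)
        have h4 := hg.cut
        have h5 : 0 ≤ α / 4 * ((φ u).card : ℝ) := by positivity
        linarith
      · have : 2 * ((D ∪ φ u).card : ℝ) ≤ N := by linarith
        rw [hN] at this
        exact_mod_cast this
    have := hnoD _ _ _ this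
    omega
  -- all vertices are embedded
  have hall : ∀ v, v ∈ K := by
    by_contra hcon
    push Not at hcon
    obtain ⟨v, hv⟩ := hcon
    obtain ⟨x0, hx0⟩ := Finset.card_pos.1 hUpos
    have hch : ∀ u : W, ∃ P : Finset V, P ⊆ U ∧ x0 ∈ P ∧ P.card ≤ 2 * k + 2 ∧
        (G.induce (P : Set V)).Connected ∧ (u ∈ K → ∃ a ∈ φ u, ∃ b ∈ P, G.Adj a b) := by
      intro u
      by_cases hu : u ∈ K
      · obtain ⟨a, ha, x, hx, hax⟩ := hnb u hu
        obtain ⟨P, h1, h2, h3, h4, h5⟩ :=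
          short_connect G hd hd0 U (by positivity) hUexp k hk x0 x hx0 hx
        exact ⟨P, h1, h2, h4, h5, fun _ => ⟨a, ha, x, h3, hax⟩⟩
      · obtain ⟨P, h1, h2, h3, h4, h5⟩ :=
          short_connect G hd hd0 U (by positivity) hUexp k hk x0 x0 hx0 hx0
        exact ⟨P, h1, h2, h4, h5, fun h => absurd h hu⟩
    choose P hPU hPx hPc hPconn hPadj using hch
    let Nb : Finset W := Finset.univ.filter (fun u => H.Adj v u)
    have hNb : Nb.card ≤ 3 := by
      have := hH v
      rw [Nat.card_eq_card_toFinset] at this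
      refine le_trans (Finset.card_le_card ?_) this
      intro u hu
      simpa [Nb] using hu
    let Q : Finset V := (insert v Nb).biUnion P
    have hQU : Q ⊆ U := by
      intro a ha
      simp only [Q, Finset.mem_biUnion] at ha
      obtain ⟨u, _, hu⟩ := ha
      exact hPU u hu
    have hQconn : (G.induce (Q : Set V)).Connected := by
      have : (Q : Set V) = ⋃₀ ((fun u => (P u : Set V)) '' (insert v Nb : Finset W)) := by
        simp only [Q, Finset.coe_biUnion, Set.sUnion_image, Finset.mem_coe]
      rw [this]
      apply SimpleGraph.induce_sUnion_connected_of_pairwise_not_disjoint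
      · exact ⟨P v, v, by simp, rfl⟩
      · rintro _ _ ⟨u, _, rfl⟩ ⟨u', _, rfl⟩
        exact ⟨x0, hPx u, hPx u'⟩
      · rintro _ ⟨u, _, rfl⟩
        exact hPconn u
    have hQs : Q.card ≤ s := by
      have h1 : Q.card ≤ (insert v Nb).card * (2 * k + 2) :=
        Finset.card_biUnion_le_card_mul _ _ _ (fun u _ => hPc u)
      have h2 : (insert v Nb).card ≤ 4 := (Finset.card_insert_le _ _).trans (by omega)
      have h3 := Nat.mul_le_mul_right (2 * k + 2) h2
      omega
    have hQadj : ∀ u ∈ K, H.Adj v u → ∃ a ∈ φ u, ∃ b ∈ Q, G.Adj a b := by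
      intro u hu hvu
      obtain ⟨a, ha, b, hb, hab⟩ := hPadj u hu
      refine ⟨a, ha, b, ?_, hab⟩
      simp only [Q, Finset.mem_biUnion]
      exact ⟨u, by simp [Nb, hvu], hb⟩
    have hQdis : ∀ u ∈ K, Disjoint (φ u) Q := by
      intro u hu
      rw [Finset.disjoint_right]
      intro a ha hau
      have := hQU ha
      simp only [hU, hB, Finset.mem_compl, Finset.mem_union, Finset.mem_biUnion] at this
      exact this (Or.inr ⟨u, hu, hau⟩)
    have hQD : Disjoint Q D := by
      rw [Finset.disjoint_left]
      intro a ha hau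
      have := hQU ha
      simp only [hU, Finset.mem_compl, Finset.mem_union] at this
      exact this (Or.inl hau)
    have hupd : ∀ u ∈ K, Function.update φ v Q u = φ u := by
      intro u hu
      apply Function.update_of_ne
      rintro rfl
      exact hv hu
    have : GoodState G H α s D (insert v K) (Function.update φ v Q) := by
      constructor
      · intro u hu
        rcases Finset.mem_insert.1 hu with rfl | hu
        · rwa [Function.update_self]
        · rw [hupd u hu]; exact hg.conn u hu
      · intro u hu
        rcases Finset.mem_insert.1 hu with rfl | hu
        · rwa [Function.update_self]
        · rw [hupd u hu]; exact hg.size u hu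
      · intro u hu
        rcases Finset.mem_insert.1 hu with rfl | hu
        · rwa [Function.update_self]
        · rw [hupd u hu]; exact hg.disjD u hu
      · intro u hu u' hu' hne
        rcases Finset.mem_insert.1 hu with rfl | huK
        · rcases Finset.mem_insert.1 hu' with rfl | hu'
          · exact absurd rfl hne
          · rw [Function.update_self, hupd u' hu']; exact (hQdis u' hu').symm
        · rcases Finset.mem_insert.1 hu' with rfl | hu'
          · rw [Function.update_self, hupd u huK]; exact hQdis u huK
          · rw [hupd u huK, hupd u' hu']; exact hg.disj u huK u' hu' hne
      · intro u hu u' hu' hadj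
        rcases Finset.mem_insert.1 hu with rfl | huK
        · rcases Finset.mem_insert.1 hu' with rfl | hu'
          · exact absurd rfl hadj.ne
          · rw [Function.update_self, hupd u' hu']
            obtain ⟨a, ha, b, hb, hab⟩ := hQadj u' hu' hadj
            exact ⟨b, hb, a, ha, hab.symm⟩
        · rcases Finset.mem_insert.1 hu' with rfl | hu'
          · rw [Function.update_self, hupd u huK]
            exact hQadj u huK hadj.symm
          · rw [hupd u huK, hupd u' hu']; exact hg.adj u huK u' hu' hadj
      · refine le_trans ?_ hg.cut
        have : eN G D (D ∪ (insert v K).biUnion (Function.update φ v Q))ᶜ ≤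
            eN G D (D ∪ K.biUnion φ)ᶜ := by
          apply eN_mono G (Finset.Subset.refl _)
          rw [Finset.compl_subset_compl]
          apply Finset.union_subset_union_right
          intro a ha
          rw [Finset.mem_biUnion] at ha ⊢
          obtain ⟨u, hu, hau⟩ := ha
          exact ⟨u, Finset.mem_insert_of_mem hu, by rwa [hupd u hu]⟩
        exact_mod_cast this
      · exact hg.half
    have h1 := hnoK _ _ this
    rw [Finset.card_insert_of_notMem hv] at h1
    omega
  refine ⟨fun u => (φ u : Set V), fun u => hg.conn u (hall u), ?_, ?_⟩
  · intro u v huv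
    rw [Finset.disjoint_coe]
    exact hg.disj u (hall u) v (hall v) huv
  · intro u v huv
    exact hg.adj u (hall u) v (hall v) huv

theorem IsMinor.of_hom {W V V' : Type*} {H : SimpleGraph W} {G : SimpleGraph V}
    {G' : SimpleGraph V'} (f : G →g G') (hf : Function.Injective f) (h : IsMinor H G) :
    IsMinor H G' := by
  obtain ⟨φ, h1, h2, h3⟩ := h
  refine ⟨fun u => f '' φ u, ?_, ?_, ?_⟩
  · intro u
    let g : G.induce (φ u) →g G'.induce (f '' φ u) :=
      { toFun := fun x => ⟨f x.1, x.1, x.2, rfl⟩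
        map_rel' := fun {a b} hab => f.map_rel' hab }
    refine (h1 u).map g ?_
    rintro ⟨_, x, hx, rfl⟩
    exact ⟨⟨x, hx⟩, rfl⟩
  · intro u v huv
    exact (Set.disjoint_image_iff hf).2 (h2 u v huv)
  · intro u v huv
    obtain ⟨a, ha, b, hb, hab⟩ := h3 u v huv
    exact ⟨f a, ⟨a, ha, rfl⟩, f b, ⟨b, hb, rfl⟩, f.map_rel' hab⟩

theorem pow_aux {n : ℕ} (hn : 0 < n) {t : ℝ} (ht : 0 < t) (ht1 : t ≤ 1) {k : ℕ}
    (hk : Real.logb 2 n ≤ t * k) : (n : ℝ) ≤ (1 + t) ^ k := by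
  have hn' : (0 : ℝ) < n := by exact_mod_cast hn
  have h1 : (2 : ℝ) ^ t ≤ 1 + t := by
    have := rpow_one_add_le_one_add_mul_self (s := 1) (by norm_num) ht.le ht1
    norm_num at this
    exact this
  calc (n : ℝ) = 2 ^ Real.logb 2 n := by
        rw [Real.rpow_logb] <;> norm_num
        exact hn
    _ ≤ 2 ^ (t * k) := Real.rpow_le_rpow_of_exponent_le (by norm_num) hk
    _ = (2 ^ t) ^ k := by rw [Real.rpow_mul (by norm_num), Real.rpow_natCast]
    _ ≤ _ := pow_le_pow_left₀ (by positivity) h1 k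

theorem size_aux {w α d n L h N k : ℝ} (hα : 0 < α) (hα1 : α < 1) (hd : 1 ≤ d)
    (hn : 0 < n) (hL : 1 ≤ L) (hw : 0 ≤ w) (hwN : w ≤ N) (hwn : w ≤ n) (hh0 : 0 ≤ h)
    (hh : h ≤ w ^ 2 * α ^ 2 / (2 ^ 19 * d ^ 4 * n * L))
    (hk : k ≤ L / (α / 4 / d) + 1) :
    16 * (d * (h * (8 * k + 8))) ≤ α * N := by
  have hd0 : 0 < d := by linarith
  rw [le_div_iff₀ (by positivity)] at hh
  have e1 : L / (α / 4 / d) = 4 * d * L / α := by field_simp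
  have e2 : 8 * k + 8 ≤ 48 * d * L / α := by
    have : 1 ≤ d * L / α := by
      rw [le_div_iff₀ hα]
      nlinarith
    have e3 : 48 * d * L / α = 8 * (4 * d * L / α) + 16 * (d * L / α) := by ring
    rw [e3]
    linarith
  have e4 : 16 * (d * (h * (8 * k + 8))) ≤ 16 * (d * (h * (48 * d * L / α))) := by
    gcongr
  refine e4.trans ?_
  have e5 : 16 * (d * (h * (48 * d * L / α))) = 768 * h * d ^ 2 * L / α := by ring
  rw [e5, div_le_iff₀ hα]
  have e6 : h * (2 ^ 19 * d ^ 4 * L) ≤ w * α ^ 2 := by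
    have : n * (h * (2 ^ 19 * d ^ 4 * L)) ≤ n * (w * α ^ 2) := by
      calc n * (h * (2 ^ 19 * d ^ 4 * L)) = h * (2 ^ 19 * d ^ 4 * n * L) := by ring
        _ ≤ w ^ 2 * α ^ 2 := hh
        _ = w * (w * α ^ 2) := by ring
        _ ≤ n * (w * α ^ 2) := by gcongr
    exact le_of_mul_le_mul_left this hn
  have e7 : d ^ 2 ≤ d ^ 4 := pow_le_pow_right₀ hd (by norm_num)
  calc 768 * h * d ^ 2 * L ≤ 2 ^ 19 * h * d ^ 4 * L := by gcongr; norm_num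
    _ = h * (2 ^ 19 * d ^ 4 * L) := by ring
    _ ≤ w * α ^ 2 := e6
    _ ≤ N * α ^ 2 := by gcongr
    _ = α * N * α := by ring

/-- Embedding degree-3 graphs into a Path-of-Expanders System: there is a constant
`c₀ > 0` such that for every Path-of-Expanders System `Π` of expansion `α` and width `w`
whose graph `G_Π` has maximum degree at most `d` and at most `n > c₀` vertices, every
graph `H` of maximum degree at most `3` with
`|V(H)| ≤ w²·α²/(2¹⁹·d⁴·n·log₂ n)` is a minor of `G_Π`. -/
theorem embed_into_path_of_expanders :
    ∃ c₀ : ℝ, 0 < c₀ ∧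
      ∀ (V : Type) [Fintype V] (w d n : ℕ) (α : ℝ),
        0 < α → α < 1 → 0 < w →
        ∀ P : PathOfExpanders V w α,
          DegLE P.graph d →
          Nat.card V ≤ n → c₀ < (n : ℝ) →
          ∀ (W : Type) [Fintype W] (H : SimpleGraph W),
            DegLE H 3 →
            (Nat.card W : ℝ) ≤
              (w : ℝ) ^ 2 * α ^ 2 / (2 ^ 19 * (d : ℝ) ^ 4 * n * Real.logb 2 n) →
            IsMinor H P.graph := by
  classical
  refine ⟨2, by norm_num, ?_⟩
  intro V _ w d n α hα hα1 hw P hdeg hVn hn W _ H hH hsize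
  have hn0 : 0 < n := by
    have : (0 : ℝ) < n := by linarith
    exact_mod_cast this
  rcases Nat.eq_zero_or_pos d with rfl | hd0
  · have h0 : (Nat.card W : ℝ) ≤ 0 := by simpa using hsize
    have h1 : Nat.card W = 0 := by
      have : Nat.card W ≤ 0 := by exact_mod_cast h0
      omega
    rw [Nat.card_eq_fintype_card, Fintype.card_eq_zero_iff] at h1
    exact ⟨fun _ => ∅, fun u => h1.elim u, fun u => h1.elim u, fun u => h1.elim u⟩
  · let G := (P.T 0).induce (P.TV 0)
    have hle : P.T 0 ≤ P.graph := by
      unfold PathOfExpanders.graph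
      exact le_sup_of_le_left (le_sup_of_le_right (le_iSup P.T 0))
    let f : G →g P.graph :=
      { toFun := Subtype.val
        map_rel' := fun {a b} hab => hle hab }
    have hf : Function.Injective f := Subtype.val_injective
    apply IsMinor.of_hom f hf
    have hdG : DegLE G d := by
      intro v
      refine le_trans ?_ (hdeg v.1)
      refine Nat.card_le_card_of_injective
        (fun x : {w : P.TV 0 | G.Adj v w} =>
          (⟨x.1.1, hle x.2⟩ : {w : V | P.graph.Adj v.1 w})) ?_
      intro a b hab
      simpa [Subtype.ext_iff] using hab
    have hwN : w ≤ Fintype.card (P.TV 0) := by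
      refine (P.Ct_card 0).symm.le.trans ?_
      rw [← Nat.card_eq_fintype_card]
      exact Nat.card_mono (Set.toFinite _) (P.Ct_sub 0)
    have hNn : Fintype.card (P.TV 0) ≤ n := by
      refine le_trans ?_ hVn
      rw [← Nat.card_eq_fintype_card]
      exact Finite.card_subtype_le _
    have hd1 : (1 : ℝ) ≤ d := by exact_mod_cast hd0
    have hL : 1 ≤ Real.logb 2 n := by
      rw [Real.le_logb_iff_rpow_le (by norm_num) (by exact_mod_cast hn0)]
      rw [Real.rpow_one]
      exact hn.le
    have ht : 0 < α / 4 / d := by positivity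
    have ht1 : α / 4 / d ≤ 1 := by
      rw [div_le_one (by linarith)]
      linarith
    let k := ⌈Real.logb 2 n / (α / 4 / d)⌉₊
    have hk1 : Real.logb 2 n / (α / 4 / d) ≤ k := Nat.le_ceil _
    have hk2 : (k : ℝ) ≤ Real.logb 2 n / (α / 4 / d) + 1 :=
      (Nat.ceil_lt_add_one (by positivity)).le
    refine embed_core G H hα hd0 hdG (P.T_exp 0) (by linarith) (by omega) hH k ?_ ?_
    · have h1 : ((Fintype.card (P.TV 0) : ℕ) : ℝ) ≤ n := by exact_mod_cast hNn
      refine h1.trans (pow_aux hn0 ht ht1 ?_)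
      rw [div_le_iff₀ ht] at hk1
      linarith
    · rw [Nat.card_eq_fintype_card] at hsize
      refine size_aux hα hα1 hd1 (by exact_mod_cast hn0) hL (by positivity)
        (by exact_mod_cast hwN) (by exact_mod_cast hwN.trans hNn) (by positivity) hsize hk2
end
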